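/- Let a_1, a_2, a_3, b_1, b_2 be positive reals with a_1 + a_2 + a_3 = 1 and b_1 + b_2 = 1, and set c = 1 − a_1 − a_3 b_1 (so c = a_2 + a_3 b_2 > 0). Define the 4×4 real matrices Q with rows (0, a_1, 1, b_1), (1, 0, 0, b_2), (0, a_2, 0, 0), (0, a_3, 0, 0) and Q̂ with rows (0, a_1, 1, a_2/c), (1, 0, 0, a_3 b_2/c), (0, a_3 b_1, 0, 0), (0, c, 0, 0). For q ∈ ℝ and a nonnegative matrix M, let M_q denote the matrix with (M_q)_{ij} = (M_{ij})^q if M_{ij} > 0 and (M_q)_{ij} = 0 otherwise. Then for every q ∈ ℝ, the characteristic polynomials of Q_q and Q̂_q are equal. -/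

import Mathlib

/-- The entrywise `q`-th power of a nonnegative matrix, taken only on positive
entries: `(M_q)_{ij} = (M_{ij})^q` if `M_{ij} > 0` and `0` otherwise. -/
noncomputable def entryPow (M : Matrix (Fin 4) (Fin 4) ℝ) (q : ℝ) :
    Matrix (Fin 4) (Fin 4) ℝ :=
  Matrix.of fun i j => if 0 < M i j then (M i j) ^ q else 0

lemma charpoly_aux (x y z u v : ℝ) :
    (!![0, x, 1, y; 1, 0, 0, z; 0, u, 0, 0; 0, v, 0, 0] : Matrix (Fin 4) (Fin 4) ℝ).charpoly =
      Polynomial.X ^ 4 - Polynomial.C (x + z * v) * Polynomial.X ^ 2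
        - Polynomial.C (u + y * v) * Polynomial.X := by
  have h : (!![0, x, 1, y; 1, 0, 0, z; 0, u, 0, 0; 0, v, 0, 0] :
      Matrix (Fin 4) (Fin 4) ℝ).charmatrix =
      !![Polynomial.X, -Polynomial.C x, -1, -Polynomial.C y;
         -1, Polynomial.X, 0, -Polynomial.C z;
         0, -Polynomial.C u, Polynomial.X, 0;
         0, -Polynomial.C v, 0, Polynomial.X] := by
    ext1 i j
    fin_cases i <;> fin_cases j <;> simp [Matrix.charmatrix_apply]
  rw [Matrix.charpoly, h, Matrix.det_succ_row_zero]
  simp [Fin.sum_univ_succ, Matrix.det_fin_three, Fin.succAbove]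
  ring

lemma entryPow_aux (x y z u v q : ℝ) (hx : 0 < x) (hy : 0 < y) (hz : 0 < z) (hu : 0 < u)
    (hv : 0 < v) :
    entryPow !![0, x, 1, y; 1, 0, 0, z; 0, u, 0, 0; 0, v, 0, 0] q =
      !![0, x ^ q, 1, y ^ q; 1, 0, 0, z ^ q; 0, u ^ q, 0, 0; 0, v ^ q, 0, 0] := by
  ext i j
  fin_cases i <;> fin_cases j <;> simp [entryPow, hx, hy, hz, hu, hv]

/-- from the proof of Lemma 5.4: for the two stochastic matrices
`Q` and `Q̂` below, the characteristic polynomials of the entrywise powers `Q_q` and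
`Q̂_q` coincide for every `q ∈ ℝ`. -/
theorem statement19 (a1 a2 a3 b1 b2 c : ℝ)
    (ha1 : 0 < a1) (ha2 : 0 < a2) (ha3 : 0 < a3) (hb1 : 0 < b1) (hb2 : 0 < b2)
    (hsa : a1 + a2 + a3 = 1) (hsb : b1 + b2 = 1)
    (hc : c = 1 - a1 - a3 * b1) :
    ∀ q : ℝ,
      (entryPow !![0, a1, 1, b1;
                   1, 0, 0, b2;
                   0, a2, 0, 0;
                   0, a3, 0, 0] q).charpoly =
        (entryPow !![0, a1, 1, a2 / c;
                     1, 0, 0, a3 * b2 / c;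
                     0, a3 * b1, 0, 0;
                     0, c, 0, 0] q).charpoly := by
  intro q
  have hc0 : 0 < c := by
    have : c = a2 + a3 * b2 := by
      rw [hc, ← hsa, show b2 = 1 - b1 by linarith]; ring
    rw [this]; positivity
  rw [entryPow_aux _ _ _ _ _ q ha1 hb1 hb2 ha2 ha3,
    entryPow_aux _ _ _ _ _ q ha1 (by positivity) (by positivity) (by positivity) hc0,
    charpoly_aux, charpoly_aux]
  have e1 : (a3 * b2 / c) ^ q * c ^ q = b2 ^ q * a3 ^ q := by
    rw [← Real.mul_rpow (by positivity) hc0.le, ← Real.mul_rpow hb2.le ha3.le,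
      div_mul_cancel₀ _ hc0.ne', mul_comm]
  have e2 : (a2 / c) ^ q * c ^ q = a2 ^ q := by
    rw [← Real.mul_rpow (by positivity) hc0.le, div_mul_cancel₀ _ hc0.ne']
  have e3 : (a3 * b1) ^ q = b1 ^ q * a3 ^ q := by
    rw [mul_comm, Real.mul_rpow hb1.le ha3.le]
  rw [e1, e2, e3, add_comm (a2 ^ q)]
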